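/- Lipschitz estimate for compositions in Hölder spaces: for l ≥ 1, α ∈ (0,1), there exists C = C(l,α) such that for f₁, f₂ ∈ C^{l+1,α}(𝕋³,ℝ³) and maps g₁, g₂ ∈ C^{l,α}(𝕋³,𝕋³), ‖f₁∘g₁ − f₂∘g₂‖_{l,α} ≤ C(1 + ‖∇g₁‖_{l−1,α} + ‖∇g₂‖_{l−1,α})^{l+1} [‖f₁−f₂‖_{l,α} + (‖∇f₁‖_{l,α} ∧ ‖∇f₂‖_{l,α}) ‖g₁−g₂‖_{l,α}]. -/

import Mathlib

noncomputable section

open MeasureTheory Real Set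

abbrev V3 : Type := Fin 3 → ℝ

def pd (f : V3 → ℝ) (j : Fin 3) (x : V3) : ℝ := fderiv ℝ f x (Pi.single j 1)

def Per {E : Type*} (f : V3 → E) : Prop :=
  ∀ (x : V3) (k : Fin 3 → ℤ), f (x + fun i => (k i : ℝ)) = f x

def TorusMap (g : V3 → V3) : Prop :=
  ∀ (x : V3) (k : Fin 3 → ℤ), g (x + fun i => (k i : ℝ)) = g x + fun i => (k i : ℝ)

def Box : Set V3 := Set.univ.pi fun _ => Set.Ioc (0:ℝ) 1

def l2inner (u v : V3 → V3) : ℝ := ∫ x in Box, ∑ i, u x i * v x i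

def dirD (u v : V3 → V3) : V3 → V3 := fun x i => ∑ j, u x j * pd (fun y => v y i) j x

def lie (u v : V3 → V3) : V3 → V3 := fun x => dirD u v x - dirD v u x

def jmT (σ w : V3 → V3) : V3 → V3 := fun x i => ∑ j, pd (fun y => σ y j) i x * w x j

def gradf (f : V3 → ℝ) : V3 → V3 := fun x i => pd f i x

def divg (u : V3 → V3) (x : V3) : ℝ := ∑ j, pd (fun y => u y j) j x

def curl (u : V3 → V3) : V3 → V3 := fun x =>
  ![pd (fun y => u y 2) 1 x - pd (fun y => u y 1) 2 x,
    pd (fun y => u y 0) 2 x - pd (fun y => u y 2) 0 x,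
    pd (fun y => u y 1) 0 x - pd (fun y => u y 0) 1 x]

def cross (a b : V3) : V3 :=
  ![a 1 * b 2 - a 2 * b 1, a 2 * b 0 - a 0 * b 2, a 0 * b 1 - a 1 * b 0]

def supN {E : Type*} [NormedAddCommGroup E] (f : V3 → E) : ℝ :=
  sSup (Set.range fun x => ‖f x‖)

def hSemi {E : Type*} [NormedAddCommGroup E] (α : ℝ) (f : V3 → E) : ℝ :=
  sSup {r | ∃ x y : V3, x ≠ y ∧ r = ‖f x - f y‖ / ‖x - y‖ ^ α}

def cNorm {E : Type*} [NormedAddCommGroup E] [NormedSpace ℝ E] (l : ℕ) (f : V3 → E) : ℝ :=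
  ∑ m ∈ Finset.range (l + 1), supN (fun x => iteratedFDeriv ℝ m f x)

def holNorm {E : Type*} [NormedAddCommGroup E] [NormedSpace ℝ E] (l : ℕ) (α : ℝ) (f : V3 → E) : ℝ :=
  cNorm l f + hSemi α (fun x => iteratedFDeriv ℝ l f x)

def MemHol {E : Type*} [NormedAddCommGroup E] [NormedSpace ℝ E] (l : ℕ) (α : ℝ) (f : V3 → E) : Prop :=
  ContDiff ℝ l f ∧ ∃ C, ∀ x y, ‖iteratedFDeriv ℝ l f x - iteratedFDeriv ℝ l f y‖ ≤ C * ‖x - y‖ ^ α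

def jac (g : V3 → V3) : V3 → (V3 →L[ℝ] V3) := fun x => fderiv ℝ g x

def c1Norm (f : V3 → V3) : ℝ := supN f + supN (jac f)

def c1αNorm (α : ℝ) (f : V3 → V3) : ℝ := supN f + supN (jac f) + hSemi α (jac f)

def IsFlow (u Y : ℝ → V3 → V3) (T : ℝ) : Prop :=
  (∀ x, Y 0 x = x) ∧ ∀ x, ∀ t ∈ Set.Icc 0 T, HasDerivAt (fun s => Y s x) (u t (Y t x)) t

def weberField (l v : V3 → V3) : V3 → V3 := fun x => v x + jmT l v x

def IsLeray (f w : V3 → V3) : Prop :=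
  Per w ∧ ContDiff ℝ 1 w ∧ (∀ x, divg w x = 0) ∧
  ∃ p : V3 → ℝ, Per p ∧ Differentiable ℝ p ∧ ∀ x, f x = w x + gradf p x

def Inv3 (g h : V3 → V3) : Prop := (∀ x, h (g x) = x) ∧ ∀ x, g (h x) = x

def pullb (g ginv u : V3 → V3) : V3 → V3 := fun x => fderiv ℝ ginv (g x) (u (g x))

def weber (ginv u₀ : V3 → V3) : V3 → V3 := jmT ginv (fun y => u₀ (ginv y))

def InU (l : ℕ) (α τ U : ℝ) (u₀ : V3 → V3) (u : ℝ → V3 → V3) : Prop :=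
  (Continuous fun p : ℝ × V3 => u p.1 p.2) ∧ (∀ x, u 0 x = u₀ x) ∧
  ∀ t ∈ Set.Icc 0 τ, MemHol (l+1) α (u t) ∧ Per (u t) ∧ (∀ x, divg (u t) x = 0) ∧
    holNorm (l+1) α (u t) ≤ U

def PhiRel (φ ψ : ℝ → V3 → V3) (u₀ : V3 → V3) (τ : ℝ) (u uhat : ℝ → V3 → V3) : Prop :=
  ∃ Y Yinv : ℝ → V3 → V3,
    IsFlow (fun t => pullb (φ t) (ψ t) (u t)) Y τ ∧
    (∀ t ∈ Set.Icc 0 τ, Inv3 (Y t) (Yinv t)) ∧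
    ∀ t ∈ Set.Icc 0 τ, IsLeray (weber (fun x => Yinv t (ψ t x)) u₀) (uhat t)


def Bd (α : ℝ) {E : Type} [NormedAddCommGroup E] (f : V3 → E) (K : ℝ) : Prop :=
  (∀ x, ‖f x‖ ≤ K) ∧ ∀ x y, ‖f x - f y‖ ≤ K * ‖x - y‖ ^ α

def HH (α : ℝ) : ℕ → ∀ {E : Type} [NormedAddCommGroup E] [NormedSpace ℝ E], (V3 → E) → ℝ → Prop
  | 0, _, _, _, f, K => Bd α f K
  | n+1, _, _, _, f, K => Bd α f K ∧ Differentiable ℝ f ∧ HH α n (fderiv ℝ f) K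

set_option linter.unusedSectionVars false

section helpers
variable {α : ℝ} {E F W : Type} [NormedAddCommGroup E] [NormedSpace ℝ E]
  [NormedAddCommGroup F] [NormedSpace ℝ F] [NormedAddCommGroup W] [NormedSpace ℝ W]

lemma Bd.nonneg {f : V3 → E} {K : ℝ} (h : Bd α f K) : 0 ≤ K := (norm_nonneg _).trans (h.1 0)

lemma Bd.mono {f : V3 → E} {K L : ℝ} (h : Bd α f K) (hKL : K ≤ L) : Bd α f L :=
  ⟨fun x => (h.1 x).trans hKL, fun x y => (h.2 x y).trans (by gcongr)⟩

lemma Bd.add {f g : V3 → E} {K L : ℝ} (h : Bd α f K) (h' : Bd α g L) :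
    Bd α (fun x => f x + g x) (K + L) := by
  refine ⟨fun x => (norm_add_le _ _).trans (add_le_add (h.1 x) (h'.1 x)), fun x y => ?_⟩
  have e : f x + g x - (f y + g y) = (f x - f y) + (g x - g y) := by abel
  rw [e, add_mul]
  exact (norm_add_le _ _).trans (add_le_add (h.2 x y) (h'.2 x y))

lemma Bd.bilin (B : E →L[ℝ] F →L[ℝ] W) {f : V3 → E} {g : V3 → F} {K L : ℝ}
    (h : Bd α f K) (h' : Bd α g L) : Bd α (fun x => B (f x) (g x)) (2 * (‖B‖ * K * L)) := by
  have hK := h.nonneg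
  have hL := h'.nonneg
  have key : ∀ u v : ℝ, ∀ a b, ‖a‖ ≤ u → ‖b‖ ≤ v → 0 ≤ u → ‖B a b‖ ≤ ‖B‖ * u * v := by
    intro u v a b ha hb hu
    refine (B.le_opNorm₂ a b).trans ?_
    gcongr
  have hp : 0 ≤ ‖B‖ * K * L := by positivity
  refine ⟨fun x => (key _ _ _ _ (h.1 x) (h'.1 x) hK).trans (by linarith), fun x y => ?_⟩
  have e : B (f x) (g x) - B (f y) (g y) = B (f x) (g x - g y) + B (f x - f y) (g y) := by
    simp
  rw [e]
  have h1 := key _ _ _ _ (h.1 x) (h'.2 x y) hK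
  have h2 := key _ _ _ _ (h.2 x y) (h'.1 y) (by positivity)
  refine (norm_add_le _ _).trans ((add_le_add h1 h2).trans (le_of_eq (by ring)))

lemma HH.bd {n : ℕ} {f : V3 → E} {K : ℝ} (h : HH α n f K) : Bd α f K := by
  cases n with
  | zero => exact h
  | succ n => exact h.1

lemma HH.mono {n : ℕ} {f : V3 → E} {K L : ℝ} (h : HH α n f K) (hKL : K ≤ L) : HH α n f L := by
  induction n generalizing E with
  | zero => exact Bd.mono h hKL
  | succ n ih => exact ⟨h.1.mono hKL, h.2.1, ih h.2.2⟩

lemma HH.pred {n : ℕ} {f : V3 → E} {K : ℝ} (h : HH α (n+1) f K) : HH α n f K := by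
  induction n generalizing E with
  | zero => exact h.1
  | succ n ih => exact ⟨h.1, h.2.1, ih h.2.2⟩

lemma HH.add {n : ℕ} {f g : V3 → E} {K L : ℝ} (h : HH α n f K) (h' : HH α n g L) :
    HH α n (fun x => f x + g x) (K + L) := by
  induction n generalizing E with
  | zero => exact Bd.add h h'
  | succ n ih =>
    refine ⟨h.1.add h'.1, h.2.1.add h'.2.1, ?_⟩
    have e : fderiv ℝ (fun x => f x + g x) = fun x => fderiv ℝ f x + fderiv ℝ g x := by
      ext1 x
      exact fderiv_fun_add (h.2.1 x) (h'.2.1 x)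
    rw [e]
    exact ih h.2.2 h'.2.2

lemma HH.bilin {n : ℕ} (B : E →L[ℝ] F →L[ℝ] W) {f : V3 → E} {g : V3 → F} {K L : ℝ}
    (h : HH α n f K) (h' : HH α n g L) :
    HH α n (fun x => B (f x) (g x)) (2 ^ (n+1) * (‖B‖ * K * L)) := by
  have hK := h.bd.nonneg
  have hL := h'.bd.nonneg
  induction n generalizing E F W with
  | zero => simpa [HH] using Bd.bilin B h h'
  | succ n ih =>
    refine ⟨(h.1.bilin B h'.1).mono ?_, ?_, ?_⟩
    · have : (2:ℝ) ≤ 2 ^ (n+1+1) := by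
        have : (1:ℝ) ≤ 2 ^ (n+1) := one_le_pow₀ (by norm_num)
        rw [pow_succ]; linarith
      gcongr
    · exact fun x => (B.hasFDerivAt_of_bilinear (h.2.1 x).hasFDerivAt
        (h'.2.1 x).hasFDerivAt).differentiableAt
    · have e : fderiv ℝ (fun x => B (f x) (g x)) = fun x =>
          B.precompR V3 (f x) (fderiv ℝ g x) + B.precompL V3 (fderiv ℝ f x) (g x) := by
        ext1 x
        exact B.fderiv_of_bilinear (h.2.1 x) (h'.2.1 x)
      rw [e]
      have h1 := ih (B.precompR V3) h.pred h'.2.2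
      have h2 := ih (B.precompL V3) h.2.2 h'.pred
      refine (h1.add h2).mono ?_
      have a1 := B.norm_precompR_le V3
      have a2 := B.norm_precompL_le V3
      calc _ ≤ 2 ^ (n+1) * (‖B‖ * K * L) + 2 ^ (n+1) * (‖B‖ * K * L) := by gcongr
        _ = _ := by ring

lemma lip_of {g : V3 → E} (hg : Differentiable ℝ g) {G : ℝ} (hG : ∀ x, ‖fderiv ℝ g x‖ ≤ G)
    (x y : V3) : ‖g x - g y‖ ≤ G * ‖x - y‖ :=
  Convex.norm_image_sub_le_of_norm_fderiv_le (fun z _ => hg z) (fun z _ => hG z) convex_univ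
    (mem_univ _) (mem_univ _)

lemma pow_bd (hα : α ∈ Set.Ioo (0:ℝ) 1) {G r s : ℝ} (hG : 0 ≤ G) (hr : 0 ≤ r) (hs : 0 ≤ s)
    (h : s ≤ G * r) : s ^ α ≤ (1 + G) * r ^ α := by
  calc s ^ α ≤ (G * r) ^ α := Real.rpow_le_rpow hs h hα.1.le
    _ = G ^ α * r ^ α := Real.mul_rpow hG hr
    _ ≤ (1 + G) * r ^ α := by
      gcongr
      calc G ^ α ≤ (1 + G) ^ α := Real.rpow_le_rpow hG (by linarith) hα.1.le
        _ ≤ (1 + G) ^ (1:ℝ) := Real.rpow_le_rpow_of_exponent_le (by linarith) hα.2.le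
        _ = _ := Real.rpow_one _

end helpers

lemma comp_bd {α : ℝ} (hα : α ∈ Set.Ioo (0:ℝ) 1) (n : ℕ) : ∃ C : ℝ, 1 ≤ C ∧
    ∀ (E : Type) [NormedAddCommGroup E] [NormedSpace ℝ E] (f : V3 → E) (g : V3 → V3) (K G : ℝ),
      HH α n f K → Differentiable ℝ g → (∀ x, ‖fderiv ℝ g x‖ ≤ G) →
      (∀ k < n, HH α k (fderiv ℝ g) G) → HH α n (fun x => f (g x)) (C * K * (1 + G) ^ (n+1)) := by
  have base : ∀ (E : Type) [NormedAddCommGroup E] [NormedSpace ℝ E] (f : V3 → E) (g : V3 → V3)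
      (K G : ℝ), Bd α f K → Differentiable ℝ g → (∀ x, ‖fderiv ℝ g x‖ ≤ G) →
      Bd α (fun x => f (g x)) (K * (1 + G)) := by
    intro E _ _ f g K G hf hg hG
    have hK := hf.nonneg
    have hG0 : 0 ≤ G := (norm_nonneg _).trans (hG 0)
    refine ⟨fun x => (hf.1 _).trans (by nlinarith), fun x y => (hf.2 _ _).trans ?_⟩
    rw [mul_assoc]
    gcongr
    exact pow_bd hα hG0 (norm_nonneg _) (norm_nonneg _) (lip_of hg hG x y)
  induction n with
  | zero =>
    refine ⟨1, le_rfl, ?_⟩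
    intro E _ _ f g K G hf hg hG _
    simpa [HH] using base E f g K G hf hg hG
  | succ n ih =>
    obtain ⟨C, hC, ih⟩ := ih
    refine ⟨2 ^ (n+1) * C, ?_, ?_⟩
    · exact one_le_mul_of_one_le_of_one_le (one_le_pow₀ (by norm_num)) hC
    intro E _ _ f g K G hf hg hG hk
    have hK := hf.bd.nonneg
    have hG0 : 0 ≤ G := (norm_nonneg _).trans (hG 0)
    refine ⟨(base E f g K G hf.1 hg hG).mono ?_, hf.2.1.comp hg, ?_⟩
    · have h1 : 1 ≤ 2 ^ (n+1) * C :=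
        one_le_mul_of_one_le_of_one_le (one_le_pow₀ (by norm_num)) hC
      have h2 : 1 + G ≤ (1 + G) ^ (n+1+1) := le_self_pow₀ (by linarith) (by omega)
      calc K * (1 + G) ≤ (2 ^ (n+1) * C * K) * (1+G) := by
            gcongr; nlinarith
        _ ≤ _ := by gcongr
    · have e : fderiv ℝ (fun x => f (g x)) = fun x =>
          (ContinuousLinearMap.compL ℝ V3 V3 E) (fderiv ℝ f (g x)) (fderiv ℝ g x) := by
        ext1 x
        exact fderiv_comp x (hf.2.1 _) (hg x)
      rw [e]
      have h1 := ih _ (fderiv ℝ f) g K G hf.2.2 hg hG (fun k hk' => hk k (by omega))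
      refine (HH.bilin (ContinuousLinearMap.compL ℝ V3 V3 E) h1 (hk n (by omega))).mono ?_
      have hn := ContinuousLinearMap.norm_compL_le ℝ V3 V3 E
      calc _ ≤ 2 ^ (n+1) * (1 * (C * K * (1 + G) ^ (n+1)) * (1 + G)) := by
            gcongr; linarith
        _ = _ := by ring

lemma diff_bd {α : ℝ} (hα : α ∈ Set.Ioo (0:ℝ) 1) (n : ℕ) : ∃ C : ℝ, 2 ≤ C ∧
    ∀ (E : Type) [NormedAddCommGroup E] [NormedSpace ℝ E] (f : V3 → E) (g₁ g₂ : V3 → V3)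
      (K G L : ℝ), Differentiable ℝ f → HH α n (fderiv ℝ f) K →
      Differentiable ℝ g₁ → (∀ x, ‖fderiv ℝ g₁ x‖ ≤ G) → (∀ k < n, HH α k (fderiv ℝ g₁) G) →
      Differentiable ℝ g₂ → (∀ x, ‖fderiv ℝ g₂ x‖ ≤ G) → (∀ k < n, HH α k (fderiv ℝ g₂) G) →
      HH α n (fun x => g₁ x - g₂ x) L →
      HH α n (fun x => f (g₁ x) - f (g₂ x)) (C * K * L * (1 + G) ^ (n+1)) := by
  have base : ∀ (E : Type) [NormedAddCommGroup E] [NormedSpace ℝ E] (f : V3 → E)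
      (g₁ g₂ : V3 → V3) (K G L : ℝ), Differentiable ℝ f → Bd α (fderiv ℝ f) K →
      Differentiable ℝ g₁ → (∀ x, ‖fderiv ℝ g₁ x‖ ≤ G) →
      Differentiable ℝ g₂ → (∀ x, ‖fderiv ℝ g₂ x‖ ≤ G) →
      Bd α (fun x => g₁ x - g₂ x) L →
      Bd α (fun x => f (g₁ x) - f (g₂ x)) (2 * K * L * (1 + G)) := by
    intro E _ _ f g₁ g₂ K G L hf hf' hg₁ hG₁ hg₂ hG₂ hL
    have hK := hf'.nonneg
    have hL0 := hL.nonneg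
    have hG0 : 0 ≤ G := (norm_nonneg _).trans (hG₁ 0)
    have hKL : 0 ≤ K * L := by positivity
    refine ⟨fun x => ?_, fun x y => ?_⟩
    · calc _ ≤ K * ‖g₁ x - g₂ x‖ := lip_of hf hf'.1 _ _
        _ ≤ K * L := by gcongr; exact hL.1 x
        _ ≤ _ := by nlinarith [mul_nonneg hKL hG0]
    · set d := g₁ x - g₂ x with hd
      set d' := g₁ y - g₂ y with hd'
      let φ : ℝ → E := fun t => f (g₂ x + t • d) - f (g₂ y + t • d')
      have hφ : ∀ t, HasDerivAt φ (fderiv ℝ f (g₂ x + t • d) d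
          - fderiv ℝ f (g₂ y + t • d') d') t := by
        intro t
        have aux : ∀ a b : V3, HasDerivAt (fun t : ℝ => f (a + t • b)) (fderiv ℝ f (a + t • b) b) t := by
          intro a b
          have h1 : HasDerivAt (fun t : ℝ => a + t • b) b t := by
            simpa using ((hasDerivAt_id t).smul_const b).const_add a
          exact (hf (a + t • b)).hasFDerivAt.comp_hasDerivAt t h1
        exact (aux _ _).sub (aux _ _)
      have hbound : ∀ t ∈ Set.Ico (0:ℝ) 1, ‖fderiv ℝ f (g₂ x + t • d) d
          - fderiv ℝ f (g₂ y + t • d') d'‖ ≤ 2 * K * L * (1 + G) * ‖x - y‖ ^ α := by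
        intro t ht
        have e : fderiv ℝ f (g₂ x + t • d) d - fderiv ℝ f (g₂ y + t • d') d' =
          (fderiv ℝ f (g₂ x + t • d) - fderiv ℝ f (g₂ y + t • d')) d +
            fderiv ℝ f (g₂ y + t • d') (d - d') := by simp
        have hdist : ‖(g₂ x + t • d) - (g₂ y + t • d')‖ ≤ G * ‖x - y‖ := by
          have e2 : (g₂ x + t • d) - (g₂ y + t • d') =
              (1 - t) • (g₂ x - g₂ y) + t • (g₁ x - g₁ y) := by
            rw [hd, hd']; module
          rw [e2]
          refine (norm_add_le _ _).trans ?_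
          rw [norm_smul, norm_smul, Real.norm_of_nonneg ht.1,
            Real.norm_of_nonneg (by linarith [ht.2] : (0:ℝ) ≤ 1 - t)]
          have b1 := lip_of hg₁ hG₁ x y
          have b2 := lip_of hg₂ hG₂ x y
          nlinarith [ht.1, ht.2]
        have hp := pow_bd hα hG0 (norm_nonneg (x-y)) (norm_nonneg _) hdist
        rw [e]
        have hr : 0 ≤ ‖x - y‖ ^ α := by positivity
        calc _ ≤ ‖fderiv ℝ f (g₂ x + t • d) - fderiv ℝ f (g₂ y + t • d')‖ * ‖d‖ +
              ‖fderiv ℝ f (g₂ y + t • d')‖ * ‖d - d'‖ :=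
              (norm_add_le _ _).trans (add_le_add (ContinuousLinearMap.le_opNorm _ _)
                (ContinuousLinearMap.le_opNorm _ _))
          _ ≤ (K * ((1 + G) * ‖x - y‖ ^ α)) * L + K * (L * ‖x - y‖ ^ α) := by
              gcongr
              · exact (hf'.2 _ _).trans (by gcongr)
              · exact hL.1 x
              · exact hf'.1 _
              · exact hL.2 x y
          _ ≤ _ := by nlinarith [mul_nonneg (mul_nonneg hKL hG0) hr]
      have := norm_image_sub_le_of_norm_deriv_le_segment_01'
        (fun t _ => (hφ t).hasDerivWithinAt) hbound
      have e : φ 1 - φ 0 = f (g₁ x) - f (g₂ x) - (f (g₁ y) - f (g₂ y)) := by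
        simp only [φ, hd, hd', one_smul, zero_smul, add_zero, add_sub_cancel]
        abel
      rwa [e] at this
  induction n with
  | zero =>
    refine ⟨2, le_rfl, ?_⟩
    intro E _ _ f g₁ g₂ K G L hf hf' hg₁ hG₁ _ hg₂ hG₂ _ hL
    simpa [HH] using base E f g₁ g₂ K G L hf hf' hg₁ hG₁ hg₂ hG₂ hL
  | succ n ih =>
    obtain ⟨C, hC, ih⟩ := ih
    obtain ⟨C', hC', hcomp⟩ := comp_bd hα n
    have hp : (1:ℝ) ≤ 2 ^ (n+1) := one_le_pow₀ (by norm_num)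
    have hCC : 2 ≤ 2 ^ (n+1) * (C + C') := by nlinarith
    refine ⟨2 ^ (n+1) * (C + C'), hCC, ?_⟩
    intro E _ _ f g₁ g₂ K G L hf hf' hg₁ hG₁ hk₁ hg₂ hG₂ hk₂ hL
    have hK := hf'.bd.nonneg
    have hL0 := hL.bd.nonneg
    have hG0 : 0 ≤ G := (norm_nonneg _).trans (hG₁ 0)
    refine ⟨(base E f g₁ g₂ K G L hf hf'.1 hg₁ hG₁ hg₂ hG₂ hL.1).mono ?_,
      (hf.comp hg₁).sub (hf.comp hg₂), ?_⟩
    · have h2 : 1 + G ≤ (1 + G) ^ (n+1+1) := le_self_pow₀ (by linarith) (by omega)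
      gcongr
    · have e : fderiv ℝ (fun x => f (g₁ x) - f (g₂ x)) = fun x =>
          (ContinuousLinearMap.compL ℝ V3 V3 E) (fderiv ℝ f (g₁ x) - fderiv ℝ f (g₂ x))
            (fderiv ℝ g₁ x) +
          (ContinuousLinearMap.compL ℝ V3 V3 E) (fderiv ℝ f (g₂ x))
            (fderiv ℝ (fun x => g₁ x - g₂ x) x) := by
        ext1 x
        have e1 : fderiv ℝ (fun x => f (g₁ x)) x = (fderiv ℝ f (g₁ x)).comp (fderiv ℝ g₁ x) :=
          fderiv_comp x (hf _) (hg₁ x)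
        have e2 : fderiv ℝ (fun x => f (g₂ x)) x = (fderiv ℝ f (g₂ x)).comp (fderiv ℝ g₂ x) :=
          fderiv_comp x (hf _) (hg₂ x)
        rw [fderiv_fun_sub (f := fun x => f (g₁ x)) (g := fun x => f (g₂ x))
          ((hf _).comp x (hg₁ x)) ((hf _).comp x (hg₂ x)),
          fderiv_fun_sub (hg₁ x) (hg₂ x), e1, e2]
        ext v : 1
        simp
      rw [e]
      have h1 := ih _ (fderiv ℝ f) g₁ g₂ K G L hf'.2.1 hf'.2.2 hg₁ hG₁
        (fun k hk' => hk₁ k (by omega)) hg₂ hG₂ (fun k hk' => hk₂ k (by omega)) hL.pred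
      have h2 := hcomp _ (fderiv ℝ f) g₂ K G hf'.pred hg₂ hG₂ (fun k hk' => hk₂ k (by omega))
      have hn := ContinuousLinearMap.norm_compL_le ℝ V3 V3 E
      refine ((HH.bilin (ContinuousLinearMap.compL ℝ V3 V3 E) h1 (hk₁ n (by omega))).add
        (HH.bilin (ContinuousLinearMap.compL ℝ V3 V3 E) h2 hL.2.2)).mono ?_
      calc _ ≤ 2 ^ (n+1) * (1 * (C * K * L * (1 + G) ^ (n+1)) * (1 + G)) +
              2 ^ (n+1) * (1 * (C' * K * ((1 + G) ^ (n+1) * (1 + G))) * L) := by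
            gcongr
            · linarith
            · exact le_mul_of_one_le_right (by positivity) (by linarith)
        _ = _ := by ring

section conv
variable {α : ℝ} {E F : Type} [NormedAddCommGroup E] [NormedSpace ℝ E]
  [NormedAddCommGroup F] [NormedSpace ℝ F]

lemma Bd.iso (I : E ≃ₗᵢ[ℝ] F) {f : V3 → E} {K : ℝ} : Bd α (fun x => I (f x)) K ↔ Bd α f K := by
  simp [Bd, ← map_sub]

lemma bd_zero {f : V3 → E} {K : ℝ} : Bd α (iteratedFDeriv ℝ 0 f) K ↔ Bd α f K := by
  rw [iteratedFDeriv_zero_eq_comp]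
  exact Bd.iso _

lemma iter_succ (f : V3 → E) (m : ℕ) : iteratedFDeriv ℝ (m+1) f = fun x =>
    (continuousMultilinearCurryRightEquiv' ℝ m V3 E).symm (iteratedFDeriv ℝ m (fderiv ℝ f) x) := by
  ext1 x
  exact iteratedFDeriv_succ_eq_comp_right

lemma iter_succ_sub (f : V3 → E) (m : ℕ) (x y : V3) :
    ‖iteratedFDeriv ℝ (m+1) f x - iteratedFDeriv ℝ (m+1) f y‖ =
      ‖iteratedFDeriv ℝ m (fderiv ℝ f) x - iteratedFDeriv ℝ m (fderiv ℝ f) y‖ := by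
  rw [iter_succ, ← dist_eq_norm, ← dist_eq_norm]
  exact LinearIsometryEquiv.dist_map _ _ _

lemma bd_succ {f : V3 → E} {K : ℝ} {m : ℕ} :
    Bd α (iteratedFDeriv ℝ (m+1) f) K ↔ Bd α (iteratedFDeriv ℝ m (fderiv ℝ f)) K := by
  have h1 : ∀ x, ‖iteratedFDeriv ℝ (m+1) f x‖ = ‖iteratedFDeriv ℝ m (fderiv ℝ f) x‖ := fun x =>
    norm_iteratedFDeriv_fderiv.symm
  simp only [Bd, h1, iter_succ_sub]

lemma HH.to {n : ℕ} {f : V3 → E} {K : ℝ} (h : HH α n f K) :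
    ∀ m ≤ n, Bd α (iteratedFDeriv ℝ m f) K := by
  induction n generalizing E with
  | zero =>
    intro m hm
    obtain rfl : m = 0 := by omega
    exact bd_zero.2 h
  | succ n ih =>
    intro m hm
    cases m with
    | zero => exact bd_zero.2 h.1
    | succ m => exact bd_succ.2 (ih h.2.2 m (by omega))

lemma HH.of {n : ℕ} {f : V3 → E} {K : ℝ} (hf : ContDiff ℝ n f)
    (h : ∀ m ≤ n, Bd α (iteratedFDeriv ℝ m f) K) : HH α n f K := by
  induction n generalizing E with
  | zero => exact bd_zero.1 (h 0 le_rfl)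
  | succ n ih =>
    refine ⟨bd_zero.1 (h 0 (by omega)), hf.differentiable (by simp), ih ?_ ?_⟩
    · exact hf.fderiv_right (by simp)
    · exact fun m hm => bd_succ.1 (h (m+1) (by omega))

lemma HH.holNorm_le {n : ℕ} {f : V3 → E} {K : ℝ} (h : HH α n f K) :
    holNorm n α f ≤ (n + 2) * K := by
  have hK := h.bd.nonneg
  have h1 : cNorm n f ≤ (n + 1) * K := by
    unfold cNorm
    calc _ ≤ ∑ m ∈ Finset.range (n+1), K := by
          refine Finset.sum_le_sum fun m hm => ?_
          refine Real.sSup_le ?_ hK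
          rintro _ ⟨x, rfl⟩
          exact (h.to m (by simp at hm; omega)).1 x
      _ = _ := by simp
  have h2 : hSemi α (fun x => iteratedFDeriv ℝ n f x) ≤ K := by
    refine Real.sSup_le ?_ hK
    rintro _ ⟨x, y, hxy, rfl⟩
    have : 0 < ‖x - y‖ := norm_pos_iff.2 (sub_ne_zero.2 hxy)
    rw [div_le_iff₀ (by positivity)]
    exact (h.to n le_rfl).2 x y
  unfold holNorm
  linarith

lemma Per.bdd {f : V3 → E} (hf : Continuous f) (hp : Per f) : ∃ C, ∀ x, ‖f x‖ ≤ C := by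
  obtain ⟨C, hC⟩ := (isCompact_Icc (a := (0 : V3)) (b := 1)).exists_bound_of_continuousOn
    hf.continuousOn
  refine ⟨C, fun x => ?_⟩
  have e := hp (fun i => Int.fract (x i)) (fun i => ⌊x i⌋)
  have e2 : ((fun i => Int.fract (x i)) + fun i => ((⌊x i⌋ : ℤ) : ℝ)) = x := by
    ext i; simp
  rw [e2] at e
  rw [e]
  exact hC _ ⟨fun i => Int.fract_nonneg _, fun i => (Int.fract_lt_one _).le⟩

lemma Per.iter {f : V3 → E} (hp : Per f) (m : ℕ) : Per (iteratedFDeriv ℝ m f) := by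
  intro x k
  rw [← iteratedFDeriv_comp_add_right]
  congr 1
  ext1 z
  exact hp z k

lemma interp (hα : α ∈ Set.Ioo (0:ℝ) 1) {N r s : ℝ} (hN : 0 ≤ N) (hr : 0 ≤ r)
    (h1 : s ≤ 2 * N) (h2 : s ≤ N * r) : s ≤ 2 * N * r ^ α := by
  rcases le_total r 1 with h | h
  · have : r ≤ r ^ α := by
      simpa using Real.rpow_le_rpow_of_exponent_ge' hr h hα.1.le hα.2.le
    have h3 : 0 ≤ r ^ α := by positivity
    nlinarith [mul_nonneg hN h3, mul_le_mul_of_nonneg_left this hN]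
  · have : 1 ≤ r ^ α := Real.one_le_rpow h hα.1.le
    nlinarith

lemma iter_lip {n m : ℕ} {f : V3 → E} (hf : ContDiff ℝ n f) (hm : m < n) {N : ℝ}
    (h : ∀ x, ‖iteratedFDeriv ℝ (m+1) f x‖ ≤ N) (x y : V3) :
    ‖iteratedFDeriv ℝ m f x - iteratedFDeriv ℝ m f y‖ ≤ N * ‖x - y‖ := by
  refine lip_of (hf.differentiable_iteratedFDeriv (by exact_mod_cast hm)) (fun z => ?_) x y
  rw [norm_fderiv_iteratedFDeriv]
  exact h z

lemma holder_of_succ (hα : α ∈ Set.Ioo (0:ℝ) 1) {n : ℕ} {f : V3 → E}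
    (hf : ContDiff ℝ (n+1 : ℕ) f) (hp : Per f) :
    ∃ C, ∀ x y, ‖iteratedFDeriv ℝ n f x - iteratedFDeriv ℝ n f y‖ ≤ C * ‖x - y‖ ^ α := by
  obtain ⟨A, hA⟩ := (hp.iter n).bdd (hf.continuous_iteratedFDeriv (by exact_mod_cast n.le_succ))
  obtain ⟨B, hB⟩ := (hp.iter (n+1)).bdd (hf.continuous_iteratedFDeriv le_rfl)
  have hA0 : 0 ≤ A := (norm_nonneg _).trans (hA 0)
  have hB0 : 0 ≤ B := (norm_nonneg _).trans (hB 0)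
  refine ⟨2 * (A + B), fun x y => interp hα (by positivity) (norm_nonneg _) ?_ ?_⟩
  · refine (norm_sub_le _ _).trans ?_
    linarith [hA x, hA y]
  · refine (iter_lip hf n.lt_succ_self hB x y).trans ?_
    gcongr; linarith

lemma holNorm_nonneg' {n : ℕ} {f : V3 → E} : 0 ≤ holNorm n α f := by
  refine add_nonneg (Finset.sum_nonneg fun m _ => Real.sSup_nonneg ?_) (Real.sSup_nonneg ?_)
  · rintro _ ⟨x, rfl⟩; exact norm_nonneg _
  · rintro _ ⟨x, y, _, rfl⟩; positivity

lemma toHH (hα : α ∈ Set.Ioo (0:ℝ) 1) {n : ℕ} {f : V3 → E} (hf : MemHol n α f) (hp : Per f) :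
    HH α n f (2 * holNorm n α f) := by
  have hN : 0 ≤ holNorm n α f := holNorm_nonneg'
  have hs0 : ∀ m, 0 ≤ supN (fun x => iteratedFDeriv ℝ m f x) := fun m => by
    refine Real.sSup_nonneg ?_
    rintro _ ⟨x, rfl⟩; exact norm_nonneg _
  have hh0 : 0 ≤ hSemi α (fun x => iteratedFDeriv ℝ n f x) := by
    refine Real.sSup_nonneg ?_
    rintro _ ⟨x, y, _, rfl⟩; positivity
  have hc0 : 0 ≤ cNorm n f := Finset.sum_nonneg fun m _ => hs0 m
  have hsup : ∀ m ≤ n, ∀ x, ‖iteratedFDeriv ℝ m f x‖ ≤ holNorm n α f := by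
    intro m hm x
    obtain ⟨A, hA⟩ := (hp.iter m).bdd (hf.1.continuous_iteratedFDeriv (by exact_mod_cast hm))
    have h1 : ‖iteratedFDeriv ℝ m f x‖ ≤ supN (fun x => iteratedFDeriv ℝ m f x) := by
      refine le_csSup ⟨A, ?_⟩ ⟨x, rfl⟩
      rintro _ ⟨x, rfl⟩; exact hA x
    have h2 : supN (fun x => iteratedFDeriv ℝ m f x) ≤ cNorm n f :=
      Finset.single_le_sum (f := fun m => supN (fun x => iteratedFDeriv ℝ m f x))
        (fun i _ => hs0 i) (Finset.mem_range.2 (by omega))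
    unfold holNorm
    linarith
  refine HH.of hf.1 fun m hm => ⟨fun x => (hsup m hm x).trans (by linarith), fun x y => ?_⟩
  rcases hm.lt_or_eq with h | rfl
  · refine interp hα hN (norm_nonneg _) ?_ (iter_lip hf.1 h (hsup (m+1) h) x y)
    refine (norm_sub_le _ _).trans ?_
    linarith [hsup m hm x, hsup m hm y]
  · by_cases hxy : x = y
    · subst hxy; simp; positivity
    obtain ⟨C, hC⟩ := hf.2
    have hpos : 0 < ‖x - y‖ := norm_pos_iff.2 (sub_ne_zero.2 hxy)
    have h1 : ‖iteratedFDeriv ℝ m f x - iteratedFDeriv ℝ m f y‖ / ‖x - y‖ ^ α ≤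
        hSemi α (fun x => iteratedFDeriv ℝ m f x) := by
      refine le_csSup ⟨C, ?_⟩ ⟨x, y, hxy, rfl⟩
      rintro _ ⟨x, y, hxy, rfl⟩
      have hpos : 0 < ‖x - y‖ := norm_pos_iff.2 (sub_ne_zero.2 hxy)
      rw [div_le_iff₀ (by positivity)]
      exact hC x y
    rw [div_le_iff₀ (by positivity)] at h1
    refine h1.trans ?_
    gcongr
    unfold holNorm at hN ⊢
    linarith

lemma memHol_fderiv {n : ℕ} {f : V3 → E} (hf : MemHol (n+1) α f) :
    MemHol n α (fderiv ℝ f) := by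
  refine ⟨hf.1.fderiv_right (by simp), ?_⟩
  obtain ⟨C, hC⟩ := hf.2
  refine ⟨C, fun x y => ?_⟩
  have := hC x y
  rwa [iter_succ_sub] at this

lemma memHol_of_fderiv {n : ℕ} {f : V3 → E} (hf : ContDiff ℝ (n+1 : ℕ) f)
    (h : MemHol n α (fderiv ℝ f)) : MemHol (n+1) α f := by
  refine ⟨hf, ?_⟩
  obtain ⟨C, hC⟩ := h.2
  refine ⟨C, fun x y => ?_⟩
  rw [iter_succ_sub]
  exact hC x y

lemma MemHol.sub' {n : ℕ} {f g : V3 → E} (hf : MemHol n α f) (hg : MemHol n α g) :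
    MemHol n α (fun x => f x - g x) := by
  refine ⟨hf.1.sub hg.1, ?_⟩
  obtain ⟨C, hC⟩ := hf.2
  obtain ⟨D, hD⟩ := hg.2
  refine ⟨C + D, fun x y => ?_⟩
  have e : ∀ z, iteratedFDeriv ℝ n (fun x => f x - g x) z =
      iteratedFDeriv ℝ n f z - iteratedFDeriv ℝ n g z := fun z =>
    iteratedFDeriv_sub_apply hf.1.contDiffAt hg.1.contDiffAt
  rw [e, e, add_mul, sub_sub_sub_comm]
  exact (norm_sub_le _ _).trans (add_le_add (hC x y) (hD x y))

lemma Per.fderiv' {f : V3 → E} (hp : Per f) : Per (fderiv ℝ f) := by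
  intro x k
  rw [← fderiv_comp_add_right]
  congr 1
  ext1 z
  exact hp z k

lemma TorusMap.jac' {g : V3 → V3} (hp : TorusMap g) : Per (jac g) := by
  intro x k
  unfold jac
  rw [← fderiv_comp_add_right]
  have : (fun z => g (z + fun i => (k i : ℝ))) = fun z => g z + fun i => (k i : ℝ) := by
    ext1 z; exact hp z k
  rw [this, fderiv_add_const]

lemma HH.lower {n k : ℕ} {f : V3 → E} {K : ℝ} (h : HH α n f K) (hk : k ≤ n) : HH α k f K := by
  induction n with
  | zero => obtain rfl : k = 0 := by omega
            exact h
  | succ n ih =>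
    rcases hk.lt_or_eq with h' | rfl
    · exact ih h.pred (by omega)
    · exact h

end conv

/-- Lipschitz estimate for compositions in Hölder spaces. -/
theorem holder_composition_lipschitz
    (l : ℕ) (hl : 1 ≤ l) (α : ℝ) (hα : α ∈ Set.Ioo (0:ℝ) 1) :
    ∃ C > 0, ∀ f₁ f₂ g₁ g₂ : V3 → V3,
      MemHol (l+1) α f₁ → Per f₁ → MemHol (l+1) α f₂ → Per f₂ →
      ContDiff ℝ l g₁ → TorusMap g₁ → MemHol (l-1) α (jac g₁) →
      ContDiff ℝ l g₂ → TorusMap g₂ → MemHol (l-1) α (jac g₂) →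
      holNorm l α (fun x => f₁ (g₁ x) - f₂ (g₂ x))
        ≤ C * (1 + holNorm (l-1) α (jac g₁) + holNorm (l-1) α (jac g₂)) ^ (l+1)
          * (holNorm l α (fun x => f₁ x - f₂ x)
            + min (holNorm l α (jac f₁)) (holNorm l α (jac f₂))
              * holNorm l α (fun x => g₁ x - g₂ x)) := by
  obtain ⟨n, rfl⟩ : ∃ n, l = n + 1 := ⟨l - 1, by omega⟩
  simp only [Nat.add_sub_cancel]
  obtain ⟨C₁, hC₁, hcomp⟩ := comp_bd hα (n+1)
  obtain ⟨C₂, hC₂, hdiff⟩ := diff_bd hα (n+1)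
  refine ⟨(((n+1 : ℕ) : ℝ) + 2) * ((2 * C₁ + 4 * C₂) * 3 ^ (n+1+1)), by positivity, ?_⟩
  -- one-sided estimate
  have main : ∀ f₁ f₂ g₁ g₂ : V3 → V3,
      MemHol (n+1+1) α f₁ → Per f₁ → MemHol (n+1+1) α f₂ → Per f₂ →
      ContDiff ℝ (n+1 : ℕ) g₁ → TorusMap g₁ → MemHol n α (jac g₁) →
      ContDiff ℝ (n+1 : ℕ) g₂ → TorusMap g₂ → MemHol n α (jac g₂) →
      HH α (n+1) (fun x => (f₁ (g₁ x) - f₂ (g₁ x)) + (f₂ (g₁ x) - f₂ (g₂ x)))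
        ((2 * C₁ + 4 * C₂) * 3 ^ (n+1+1) *
          (1 + holNorm n α (jac g₁) + holNorm n α (jac g₂)) ^ (n+1+1)
          * (holNorm (n+1) α (fun x => f₁ x - f₂ x) + holNorm (n+1) α (jac f₂)
              * holNorm (n+1) α (fun x => g₁ x - g₂ x))) ∧
      HH α (n+1) (fun x => (f₁ (g₂ x) - f₂ (g₂ x)) + (f₂ (g₁ x) - f₂ (g₂ x)))
        ((2 * C₁ + 4 * C₂) * 3 ^ (n+1+1) *
          (1 + holNorm n α (jac g₁) + holNorm n α (jac g₂)) ^ (n+1+1)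
          * (holNorm (n+1) α (fun x => f₁ x - f₂ x) + holNorm (n+1) α (jac f₂)
              * holNorm (n+1) α (fun x => g₁ x - g₂ x))) := by
    intro f₁ f₂ g₁ g₂ hf₁ hp₁ hf₂ hp₂ hg₁ ht₁ hj₁ hg₂ ht₂ hj₂
    have hfp : Per (fun x => f₁ x - f₂ x) := fun x k => by simp only [hp₁ x k, hp₂ x k]
    have hgp : Per (fun x => g₁ x - g₂ x) := fun x k => by
      simp only [ht₁ x k, ht₂ x k, add_sub_add_right_eq_sub]
    have hfm : MemHol (n+1) α (fun x => f₁ x - f₂ x) :=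
      ⟨(hf₁.1.sub hf₂.1).of_le (by exact_mod_cast (n+1).le_succ),
        holder_of_succ hα (hf₁.1.sub hf₂.1) hfp⟩
    have hgm : MemHol (n+1) α (fun x => g₁ x - g₂ x) :=
      (memHol_of_fderiv hg₁ hj₁).sub' (memHol_of_fderiv hg₂ hj₂)
    have hF := toHH hα hfm hfp
    have hL := toHH hα hgm hgp
    have hK := toHH hα (memHol_fderiv hf₂) hp₂.fderiv'
    have hJ₁ := toHH hα hj₁ ht₁.jac'
    have hJ₂ := toHH hα hj₂ ht₂.jac'
    have n1 : 0 ≤ holNorm n α (jac g₁) := holNorm_nonneg'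
    have n2 : 0 ≤ holNorm n α (jac g₂) := holNorm_nonneg'
    have n3 : 0 ≤ holNorm (n+1) α (fun x => f₁ x - f₂ x) := holNorm_nonneg'
    have n4 : 0 ≤ holNorm (n+1) α (fun x => g₁ x - g₂ x) := holNorm_nonneg'
    have n5 : 0 ≤ holNorm (n+1) α (jac f₂) := holNorm_nonneg'
    change HH α (n+1) (fderiv ℝ f₂) (2 * holNorm (n+1) α (jac f₂)) at hK
    change HH α n (fderiv ℝ g₁) _ at hJ₁
    change HH α n (fderiv ℝ g₂) _ at hJ₂
    generalize holNorm n α (jac g₁) = N₁ at *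
    generalize holNorm n α (jac g₂) = N₂ at *
    generalize holNorm (n+1) α (fun x => f₁ x - f₂ x) = M at *
    generalize holNorm (n+1) α (fun x => g₁ x - g₂ x) = L at *
    generalize holNorm (n+1) α (jac f₂) = K at *
    have hJ₁ := hJ₁.mono (L := 2 * (1 + N₁ + N₂)) (by linarith)
    have hJ₂ := hJ₂.mono (L := 2 * (1 + N₁ + N₂)) (by linarith)
    have dg₁ : Differentiable ℝ g₁ := hg₁.differentiable (by simp)
    have dg₂ : Differentiable ℝ g₂ := hg₂.differentiable (by simp)
    have df₂ : Differentiable ℝ f₂ := hf₂.1.differentiable (by simp)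
    have a1 := hcomp _ _ g₁ _ _ hF dg₁ hJ₁.bd.1 (fun k hk => hJ₁.lower (by omega))
    have a2 := hcomp _ _ g₂ _ _ hF dg₂ hJ₂.bd.1 (fun k hk => hJ₂.lower (by omega))
    have a3 := hdiff _ f₂ g₁ g₂ _ _ _ df₂ hK dg₁ hJ₁.bd.1 (fun k hk => hJ₁.lower (by omega))
      dg₂ hJ₂.bd.1 (fun k hk => hJ₂.lower (by omega)) hL
    have hP : (1 + 2 * (1 + N₁ + N₂)) ^ (n+1+1) ≤ 3 ^ (n+1+1) * (1 + N₁ + N₂) ^ (n+1+1) := by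
      rw [← mul_pow]; gcongr; linarith
    have hfin : C₁ * (2 * M) * (1 + 2 * (1 + N₁ + N₂)) ^ (n+1+1) +
        C₂ * (2 * K) * (2 * L) * (1 + 2 * (1 + N₁ + N₂)) ^ (n+1+1) ≤
        (2 * C₁ + 4 * C₂) * 3 ^ (n+1+1) * (1 + N₁ + N₂) ^ (n+1+1) * (M + K * L) := by
      calc _ ≤ (2 * C₁ * M + 4 * C₂ * (K * L)) *
            (3 ^ (n+1+1) * (1 + N₁ + N₂) ^ (n+1+1)) := by
            rw [← add_mul]
            have : C₁ * (2 * M) + C₂ * (2 * K) * (2 * L) = 2 * C₁ * M + 4 * C₂ * (K * L) := by ring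
            rw [this]
            gcongr
        _ ≤ ((2 * C₁ + 4 * C₂) * (M + K * L)) *
            (3 ^ (n+1+1) * (1 + N₁ + N₂) ^ (n+1+1)) := by
            gcongr
            have := mul_nonneg n5 n4
            nlinarith [mul_nonneg (by linarith : 0 ≤ C₁) this, mul_nonneg (by linarith : 0 ≤ C₂) n3]
        _ = _ := by ring
    exact ⟨(a1.add a3).mono hfin, (a2.add a3).mono hfin⟩
  intro f₁ f₂ g₁ g₂ hf₁ hp₁ hf₂ hp₂ hg₁ ht₁ hj₁ hg₂ ht₂ hj₂
  have b1 := (main f₁ f₂ g₁ g₂ hf₁ hp₁ hf₂ hp₂ hg₁ ht₁ hj₁ hg₂ ht₂ hj₂).1.holNorm_le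
  -- second decomposition: by symmetry, up to a sign
  have b2 := (main f₂ f₁ g₂ g₁ hf₂ hp₂ hf₁ hp₁ hg₂ ht₂ hj₂ hg₁ ht₁ hj₁).1.holNorm_le
  have hneg : ∀ h : V3 → V3, holNorm (n+1) α (fun x => - h x) = holNorm (n+1) α h := by
    intro h
    have e : ∀ m x, iteratedFDeriv ℝ m (fun x => - h x) x = - iteratedFDeriv ℝ m h x := fun m x =>
      iteratedFDeriv_neg_apply
    unfold holNorm cNorm supN hSemi
    simp only [e, norm_neg, ← neg_sub', norm_neg]
  have s1 : (fun x => (f₁ (g₁ x) - f₂ (g₁ x)) + (f₂ (g₁ x) - f₂ (g₂ x))) =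
      fun x => f₁ (g₁ x) - f₂ (g₂ x) := by ext1 x; abel
  have s2 : (fun x => (f₂ (g₂ x) - f₁ (g₂ x)) + (f₁ (g₂ x) - f₁ (g₁ x))) =
      fun x => - (f₁ (g₁ x) - f₂ (g₂ x)) := by ext1 x; abel
  have s3 : (fun x => f₂ x - f₁ x) = fun x => - (f₁ x - f₂ x) := by ext1 x; abel
  have s4 : (fun x => g₂ x - g₁ x) = fun x => - (g₁ x - g₂ x) := by ext1 x; abel
  rw [s1] at b1
  rw [s2, s3, s4, hneg (fun x => f₁ (g₁ x) - f₂ (g₂ x)), hneg (fun x => f₁ x - f₂ x),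
    hneg (fun x => g₁ x - g₂ x), add_right_comm 1] at b2
  rcases min_choice (holNorm (n+1) α (jac f₁)) (holNorm (n+1) α (jac f₂)) with h | h
  · rw [h]; exact b2.trans (le_of_eq (by ring))
  · rw [h]; exact b1.trans (le_of_eq (by ring))
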